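/- Fix a real α with 1 < α < 3/2. For even integers n ≥ 4, define λ_k(α,n) = 2 ∑_{j=1}^{n−1} j^{−α} cos(2πkj/n), the rescaled eigenvalues λ̃_k(α,n) = (λ_k(α,n) − λ_{n/2}(α,n)) / (λ_0(α,n) − λ_{n/2}(α,n)), and S_2(α,n) = (1/n) ∑_{k=1}^{n−1} (1 − λ̃_k(α,n))^{−2}. Then the sequence S_2(α,n) converges to a finite positive limit as even n → ∞. -/

import Mathlib

/-- Eigenvalues of the long-range circulant Hamiltonian. -/
noncomputable def lam (α : ℝ) (n k : ℕ) : ℝ :=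
  2 * ∑ j ∈ Finset.Icc 1 (n - 1), (j : ℝ) ^ (-α) * Real.cos (2 * Real.pi * k * j / n)

/-- Rescaled eigenvalues `λ̃_k = (λ_k - λ_{n/2})/(λ_0 - λ_{n/2})` for even `n`. -/
noncomputable def lamT (α : ℝ) (n k : ℕ) : ℝ :=
  (lam α n k - lam α n (n / 2)) / (lam α n 0 - lam α n (n / 2))

/-- `S_q(α,n) = (1/n) ∑_{k=1}^{n-1} (1 - λ̃_k)^{-q}`. -/
noncomputable def Sq (q : ℕ) (α : ℝ) (n : ℕ) : ℝ :=
  (1 / (n : ℝ)) * ∑ k ∈ Finset.Icc 1 (n - 1), (1 - lamT α n k) ^ (-(q : ℤ))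

/-- Half of the spectral gap `λ_0 - λ_k`. -/
noncomputable def gapD (α : ℝ) (n k : ℕ) : ℝ :=
  ∑ j ∈ Finset.Icc 1 (n - 1), (j : ℝ) ^ (-α) * (1 - Real.cos (2 * Real.pi * k * j / n))

lemma lam_zero_sub (α : ℝ) (n k : ℕ) : lam α n 0 - lam α n k = 2 * gapD α n k := by
  unfold lam gapD
  rw [← mul_sub, ← Finset.sum_sub_distrib]
  congr 1
  apply Finset.sum_congr rfl
  intro j _
  simp
  ring

lemma one_sub_lamT (α : ℝ) (m k : ℕ) (h : 0 < gapD α (2 * m) m) :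
    1 - lamT α (2 * m) k = gapD α (2 * m) k / gapD α (2 * m) m := by
  unfold lamT
  have e : 2 * m / 2 = m := by omega
  rw [e]
  have h1 := lam_zero_sub α (2 * m) m
  have h2 := lam_zero_sub α (2 * m) k
  have h3 : lam α (2 * m) k - lam α (2 * m) m = 2 * gapD α (2 * m) m - 2 * gapD α (2 * m) k := by
    linarith
  rw [h1, h3]
  field_simp
  ring

lemma gapD_symm (α : ℝ) (n k : ℕ) (hn : 0 < n) (hk : k ≤ n) :
    gapD α n (n - k) = gapD α n k := by
  unfold gapD
  apply Finset.sum_congr rfl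
  intro j _
  congr 2
  have hn' : (n : ℝ) ≠ 0 := by positivity
  rw [Nat.cast_sub hk]
  have : 2 * Real.pi * ((n : ℝ) - k) * j / n = (j : ℝ) * (2 * Real.pi) - 2 * Real.pi * k * j / n := by
    field_simp
  rw [this, Real.cos_nat_mul_two_pi_sub]

lemma sum_sq_lower (M : ℕ) : (M : ℝ) ^ 3 / 3 ≤ ∑ j ∈ Finset.Icc 1 M, (j : ℝ) ^ 2 := by
  induction M with
  | zero => simp
  | succ M ih =>
    rw [Finset.sum_Icc_succ_top (by omega)]
    push_cast
    have : (0 : ℝ) ≤ M := by positivity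
    nlinarith

lemma gapD_lower (α : ℝ) (h1 : 1 < α) (h2 : α < 3 / 2) (m k : ℕ) (hk : 1 ≤ k) (hkm : k ≤ m) :
    (2 / 3 * 2 ^ (α - 3)) * ((k : ℝ) / m) ^ (α - 1) ≤ gapD α (2 * m) k := by
  set M := m / k with hM
  have hM1 : 1 ≤ M := (Nat.one_le_div_iff (by omega)).2 hkm
  have hMm : M ≤ m := Nat.div_le_self _ _
  have hMk : M * k ≤ m := Nat.div_mul_le_self _ _
  have hlt : m < (M + 1) * k := by
    exact Nat.lt_mul_of_div_lt (by omega) (by omega)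
  have hk0 : (0 : ℝ) < k := by exact_mod_cast hk
  have hm0 : (0 : ℝ) < m := by exact_mod_cast (by omega : 0 < m)
  have hM0 : (0 : ℝ) < M := by exact_mod_cast hM1
  set r : ℝ := (k : ℝ) / m with hr
  have hr0 : 0 < r := by positivity
  have hMr : (2 * r)⁻¹ ≤ M := by
    rw [hr]
    have h' : (m : ℝ) ≤ 2 * M * k := by
      have : m ≤ 2 * M * k := by nlinarith
      exact_mod_cast this
    rw [inv_le_iff_one_le_mul₀ (by positivity)]
    rw [show (M : ℝ) * (2 * (k / m)) = (2 * M * k) / m by ring]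
    rwa [one_le_div hm0]
  have step1 : ∑ j ∈ Finset.Icc 1 M, (M : ℝ) ^ (-α) * (2 * r ^ 2 * (j : ℝ) ^ 2) ≤ gapD α (2 * m) k := by
    unfold gapD
    refine le_trans (Finset.sum_le_sum (g := fun j : ℕ => (j : ℝ) ^ (-α) *
      (1 - Real.cos (2 * Real.pi * k * j / (2 * m : ℕ)))) ?_)
      (Finset.sum_le_sum_of_subset_of_nonneg ?_ ?_)
    · intro j hj
      rw [Finset.mem_Icc] at hj
      have hj0 : (0 : ℝ) < j := by exact_mod_cast hj.1
      have hx : 2 * Real.pi * k * j / (2 * m : ℕ) = Real.pi * (r * j) := by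
        rw [hr]; push_cast; field_simp
      have hrj : r * j ≤ 1 := by
        rw [hr, div_mul_eq_mul_div, div_le_one hm0]
        have : k * j ≤ m := by nlinarith [hj.2]
        exact_mod_cast this
      apply mul_le_mul
      · exact Real.rpow_le_rpow_of_nonpos hj0 (by exact_mod_cast hj.2) (by linarith)
      · rw [hx]
        have hp := Real.pi_pos
        have hc := Real.cos_le_one_sub_mul_cos_sq (x := Real.pi * (r * j)) (by
          rw [abs_of_nonneg (by positivity)]
          nlinarith)
        have : 2 / Real.pi ^ 2 * (Real.pi * (r * j)) ^ 2 = 2 * r ^ 2 * (j : ℝ) ^ 2 := by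
          field_simp
        linarith
      · positivity
      · positivity
    · exact Finset.Icc_subset_Icc le_rfl (by omega)
    · intro j _ _
      exact mul_nonneg (by positivity) (by linarith [Real.cos_le_one (2 * Real.pi * k * j / (2 * m : ℕ))])
  refine le_trans ?_ step1
  rw [← Finset.mul_sum, ← Finset.mul_sum]
  have hs := sum_sq_lower M
  calc (2 / 3 * 2 ^ (α - 3)) * r ^ (α - 1)
      = 2 / 3 * r ^ 2 * ((2 * r)⁻¹) ^ (3 - α) := by
        rw [Real.inv_rpow (by positivity), ← Real.rpow_neg (by positivity),
          Real.mul_rpow (by norm_num) hr0.le, show α - 1 = 2 + (-(3 - α)) by ring,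
          Real.rpow_add hr0, show α - 3 = -(3 - α) by ring, Real.rpow_two]
        ring
    _ ≤ 2 / 3 * r ^ 2 * (M : ℝ) ^ (3 - α) := by
        gcongr
        linarith
    _ = (M : ℝ) ^ (-α) * (2 * r ^ 2 * ((M : ℝ) ^ 3 / 3)) := by
        rw [show 3 - α = -α + (3 : ℕ) by push_cast; ring, Real.rpow_add_natCast hM0.ne']
        ring
    _ ≤ _ := by gcongr

/-- The limiting dispersion relation. -/
noncomputable def gapLim (α x : ℝ) : ℝ :=
  ∑' j : ℕ, (j : ℝ) ^ (-α) * (1 - Real.cos (Real.pi * x * j))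

lemma one_sub_cos_mem (y : ℝ) : 0 ≤ 1 - Real.cos y ∧ 1 - Real.cos y ≤ 2 :=
  ⟨by linarith [Real.cos_le_one y], by linarith [Real.neg_one_le_cos y]⟩

lemma gapD_tendsto (α x : ℝ) (h1 : 1 < α) (k : ℕ → ℕ)
    (hk : Filter.Tendsto (fun m : ℕ => (k m : ℝ) / m) Filter.atTop (nhds x)) :
    Filter.Tendsto (fun m : ℕ => gapD α (2 * m) (k m)) Filter.atTop (nhds (gapLim α x)) := by
  have hsum : Summable (fun j : ℕ => (j : ℝ) ^ (-α) * 2) :=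
    (Real.summable_nat_rpow.2 (by linarith)).mul_right 2
  have key := tendsto_tsum_of_dominated_convergence (𝓕 := Filter.atTop)
    (f := fun (m : ℕ) (j : ℕ) => if j ∈ Finset.Icc 1 (2 * m - 1) then
      (j : ℝ) ^ (-α) * (1 - Real.cos (2 * Real.pi * (k m) * j / (2 * m : ℕ))) else 0)
    (g := fun j : ℕ => (j : ℝ) ^ (-α) * (1 - Real.cos (Real.pi * x * j))) hsum ?_ ?_
  · refine key.congr ?_
    intro m
    rw [tsum_eq_sum (s := Finset.Icc 1 (2 * m - 1)) (fun j hj => if_neg hj)]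
    unfold gapD
    exact Finset.sum_congr rfl (fun j hj => if_pos hj)
  · intro j
    rcases Nat.eq_zero_or_pos j with rfl | hj
    · simp
    · have hc : Filter.Tendsto (fun m : ℕ => (j : ℝ) ^ (-α) *
          (1 - Real.cos (Real.pi * ((k m : ℝ) / m) * j))) Filter.atTop
          (nhds ((j : ℝ) ^ (-α) * (1 - Real.cos (Real.pi * x * j)))) := by
        have hcont : Continuous (fun y : ℝ => (j : ℝ) ^ (-α) * (1 - Real.cos (Real.pi * y * j))) := by
          fun_prop
        exact (hcont.tendsto x).comp hk
      refine hc.congr' ?_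
      filter_upwards [Filter.eventually_ge_atTop (j + 1)] with m hm
      rw [if_pos (Finset.mem_Icc.2 ⟨hj, by omega⟩)]
      congr 3
      have : (m : ℝ) ≠ 0 := by
        have : 0 < m := by omega
        positivity
      push_cast
      field_simp
  · refine Filter.Eventually.of_forall ?_
    intro m j
    have hp : (0 : ℝ) ≤ (j : ℝ) ^ (-α) := by positivity
    split_ifs
    · have := one_sub_cos_mem (2 * Real.pi * (k m) * j / (2 * m : ℕ))
      rw [Real.norm_of_nonneg (mul_nonneg hp this.1)]
      exact mul_le_mul_of_nonneg_left this.2 hp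
    · simp [hp]

lemma gapD_upper (α : ℝ) (h1 : 1 < α) (n k : ℕ) :
    gapD α n k ≤ ∑' j : ℕ, (j : ℝ) ^ (-α) * 2 := by
  have hsum : Summable (fun j : ℕ => (j : ℝ) ^ (-α) * 2) :=
    (Real.summable_nat_rpow.2 (by linarith)).mul_right 2
  refine le_trans ?_ (hsum.sum_le_tsum (Finset.Icc 1 (n - 1)) (fun j _ => by positivity))
  unfold gapD
  apply Finset.sum_le_sum
  intro j _
  exact mul_le_mul_of_nonneg_left (one_sub_cos_mem _).2 (by positivity)

lemma gapLim_pos (α x : ℝ) (h1 : 1 < α) (hx : 0 < x) (hx1 : x ≤ 1) : 0 < gapLim α x := by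
  have hsum : Summable (fun j : ℕ => (j : ℝ) ^ (-α) * 2) :=
    (Real.summable_nat_rpow.2 (by linarith)).mul_right 2
  have hs : Summable (fun j : ℕ => (j : ℝ) ^ (-α) * (1 - Real.cos (Real.pi * x * j))) :=
    hsum.of_nonneg_of_le (fun j => mul_nonneg (by positivity) (one_sub_cos_mem _).1)
      (fun j => mul_le_mul_of_nonneg_left (one_sub_cos_mem _).2 (by positivity))
  refine hs.tsum_pos (fun j => mul_nonneg (by positivity) (one_sub_cos_mem _).1) 1 ?_
  have hp := Real.pi_pos
  have : Real.cos (Real.pi * x) < Real.cos 0 :=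
    Real.cos_lt_cos_of_nonneg_of_le_pi le_rfl (by nlinarith) (by positivity)
  rw [Real.cos_zero] at this
  simp
  linarith

lemma integral_step (f : ℕ → ℝ) (m : ℕ) (hm : 0 < m) :
    ∫ x in (0 : ℝ)..1, f ⌈(m : ℝ) * x⌉₊ = (1 / (m : ℝ)) * ∑ k ∈ Finset.Icc 1 m, f k := by
  have hm0 : (0 : ℝ) < m := by exact_mod_cast hm
  have hcongr : ∀ k : ℕ, Set.EqOn (fun _ : ℝ => f (k + 1)) (fun x : ℝ => f ⌈(m : ℝ) * x⌉₊)
      (Set.uIoc ((k : ℝ) / m) (((k + 1 : ℕ) : ℝ) / m)) := by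
    intro k x hx
    rw [Set.uIoc_of_le (by gcongr; simp), Set.mem_Ioc, div_lt_iff₀ hm0, le_div_iff₀ hm0] at hx
    have : ⌈(m : ℝ) * x⌉₊ = k + 1 := by
      rw [Nat.ceil_eq_iff (by omega)]
      constructor
      · simp; linarith [hx.1]
      · linarith [hx.2]
    simp only [this]
  have h := intervalIntegral.sum_integral_adjacent_intervals (μ := MeasureTheory.volume)
    (f := fun x : ℝ => f ⌈(m : ℝ) * x⌉₊) (a := fun k : ℕ => (k : ℝ) / m) (n := m) ?_
  · have e : ((m : ℕ) : ℝ) / m = 1 := div_self hm0.ne'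
    simp only [e, Nat.cast_zero, zero_div] at h
    rw [← h, Finset.mul_sum, Finset.range_eq_Ico, 
      Finset.sum_Ico_eq_sum_range]
    rw [show Finset.Icc 1 m = Finset.Ico 1 (m + 1) by ext; simp [Nat.lt_succ_iff], Finset.sum_Ico_eq_sum_range]
    apply Finset.sum_congr (by simp)
    intro k _
    rw [zero_add, add_comm 1 k]
    rw [intervalIntegral.integral_congr_ae (g := fun _ : ℝ => f (k + 1))
      (Filter.Eventually.of_forall (fun x hx => (hcongr k hx).symm))]
    rw [intervalIntegral.integral_const]
    push_cast
    rw [smul_eq_mul]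
    ring
  · intro k _
    exact (intervalIntegrable_const (c := f (k + 1))).congr (hcongr k)

lemma sum_symm (f : ℕ → ℝ) (m : ℕ) (hm : 0 < m) (hf : ∀ k ≤ 2 * m, f (2 * m - k) = f k) :
    ∑ k ∈ Finset.Icc 1 (2 * m - 1), f k = 2 * ∑ k ∈ Finset.Icc 1 m, f k - f m := by
  have e1 : Finset.Icc 1 (2 * m - 1) = Finset.Ico 1 (2 * m) := by ext; simp; omega
  have e2 : Finset.Icc 1 m = Finset.Ico 1 (m + 1) := by ext; simp [Nat.lt_succ_iff]
  rw [e1, e2, ← Finset.sum_Ico_consecutive f (show 1 ≤ m + 1 by omega) (show m + 1 ≤ 2 * m by omega)]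
  have h3 : ∑ k ∈ Finset.Ico (m + 1) (2 * m), f k = ∑ k ∈ Finset.Ico 1 m, f k := by
    apply Finset.sum_nbij' (fun k => 2 * m - k) (fun k => 2 * m - k)
    · intro k hk; simp at hk ⊢; omega
    · intro k hk; simp at hk ⊢; omega
    · intro k hk; simp at hk ⊢; omega
    · intro k hk; simp at hk ⊢; omega
    · intro k hk; simp at hk; exact (hf k (by omega)).symm
  rw [h3, Finset.sum_Ico_succ_top (by omega)]
  ring

lemma ceil_div_tendsto (x : ℝ) (hx : 0 < x) :
    Filter.Tendsto (fun m : ℕ => ((⌈(m : ℝ) * x⌉₊ : ℕ) : ℝ) / m) Filter.atTop (nhds x) := by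
  have := (tendsto_nat_ceil_mul_div_atTop hx.le).comp (tendsto_natCast_atTop_atTop (R := ℝ))
  refine this.congr ?_
  intro m
  simp [mul_comm]

lemma avg_tendsto (α : ℝ) (h1 : 1 < α) (h2 : α < 3 / 2) :
    Filter.Tendsto (fun m : ℕ => (1 / (m : ℝ)) * ∑ k ∈ Finset.Icc 1 m, ((gapD α (2 * m) k) ^ 2)⁻¹)
      Filter.atTop (nhds (∫ x in (0 : ℝ)..1, ((gapLim α x) ^ 2)⁻¹)) := by
  set c : ℝ := 2 / 3 * 2 ^ (α - 3) with hc
  have hc0 : 0 < c := by positivity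
  have key := intervalIntegral.tendsto_integral_filter_of_dominated_convergence
    (μ := MeasureTheory.volume) (a := (0 : ℝ)) (b := 1) (l := Filter.atTop)
    (F := fun (m : ℕ) (x : ℝ) => ((gapD α (2 * m) ⌈(m : ℝ) * x⌉₊) ^ 2)⁻¹)
    (f := fun x => ((gapLim α x) ^ 2)⁻¹)
    (fun x : ℝ => (c ^ 2)⁻¹ * x ^ (-(2 * (α - 1)))) ?_ ?_ ?_ ?_
  · refine key.congr' ?_
    filter_upwards [Filter.eventually_gt_atTop 0] with m hm
    exact integral_step (fun k => ((gapD α (2 * m) k) ^ 2)⁻¹) m hm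
  · refine Filter.Eventually.of_forall (fun m => ?_)
    have hmeas : Measurable (fun x : ℝ => ((gapD α (2 * m) ⌈(m : ℝ) * x⌉₊) ^ 2)⁻¹) := by
      have hg : Measurable (fun k : ℕ => ((gapD α (2 * m) k) ^ 2)⁻¹) := measurable_from_top
      exact hg.comp (Nat.measurable_ceil.comp (measurable_const_mul (m : ℝ)))
    exact hmeas.aestronglyMeasurable
  · filter_upwards [Filter.eventually_gt_atTop 0] with m hm
    refine Filter.Eventually.of_forall (fun x hx => ?_)
    rw [Set.uIoc_of_le zero_le_one] at hx
    obtain ⟨hx0, hx1⟩ := hx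
    have hm0 : (0 : ℝ) < m := by exact_mod_cast hm
    have hk1 : 1 ≤ ⌈(m : ℝ) * x⌉₊ := Nat.one_le_ceil_iff.2 (by positivity)
    have hk2 : ⌈(m : ℝ) * x⌉₊ ≤ m := Nat.ceil_le.2 (by nlinarith)
    have hl := gapD_lower α h1 h2 m _ hk1 hk2
    have hxr : x ≤ (⌈(m : ℝ) * x⌉₊ : ℝ) / m := by
      rw [le_div_iff₀ hm0, mul_comm]
      exact Nat.le_ceil _
    have hl2 : c * x ^ (α - 1) ≤ gapD α (2 * m) ⌈(m : ℝ) * x⌉₊ := by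
      refine le_trans ?_ hl
      gcongr
    have hpos : 0 < c * x ^ (α - 1) := by positivity
    rw [Real.norm_of_nonneg (by positivity)]
    have e : (c ^ 2)⁻¹ * x ^ (-(2 * (α - 1))) = ((c * x ^ (α - 1)) ^ 2)⁻¹ := by
      rw [Real.rpow_neg hx0.le, mul_comm 2 (α - 1), Real.rpow_mul hx0.le, Real.rpow_two,
        mul_pow c, mul_inv (c ^ 2)]
    rw [e]
    gcongr
  · exact (intervalIntegral.intervalIntegrable_rpow' (by linarith)).const_mul _
  · refine Filter.Eventually.of_forall (fun x hx => ?_)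
    rw [Set.uIoc_of_le zero_le_one] at hx
    have hp := gapLim_pos α x h1 hx.1 hx.2
    exact ((gapD_tendsto α x h1 _ (ceil_div_tendsto x hx.1)).pow 2).inv₀ (by positivity)

/-- for `1 < α < 3/2`, `S_2(α,n)` converges to a finite positive
limit along even `n → ∞`. -/
theorem stmt_16 (α : ℝ) (h1 : 1 < α) (h2 : α < 3 / 2) :
    ∃ L : ℝ, 0 < L ∧
      Filter.Tendsto (fun n : ℕ => Sq 2 α (2 * n)) Filter.atTop (nhds L) := by
  have havg := avg_tendsto α h1 h2
  set I : ℝ := ∫ x in (0 : ℝ)..1, ((gapLim α x) ^ 2)⁻¹ with hI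
  have hG := gapLim_pos α 1 h1 one_pos le_rfl
  have hgpos : ∀ m k : ℕ, 1 ≤ k → k ≤ m → 0 < gapD α (2 * m) k := by
    intro m k hk hkm
    refine lt_of_lt_of_le ?_ (gapD_lower α h1 h2 m k hk hkm)
    have : (0 : ℝ) < k := by exact_mod_cast hk
    have : (0 : ℝ) < m := by exact_mod_cast (by omega : 0 < m)
    positivity
  have hIpos : 0 < I := by
    set K : ℝ := ∑' j : ℕ, (j : ℝ) ^ (-α) * 2 with hK
    have hK0 : 0 < K := lt_of_lt_of_le (hgpos 1 1 le_rfl le_rfl) (gapD_upper α h1 _ _)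
    have : (K ^ 2)⁻¹ ≤ I := by
      refine ge_of_tendsto havg ?_
      filter_upwards [Filter.eventually_gt_atTop 0] with m hm
      have hm0 : (0 : ℝ) < m := by exact_mod_cast hm
      have hs : ∑ k ∈ Finset.Icc 1 m, (K ^ 2)⁻¹ ≤
          ∑ k ∈ Finset.Icc 1 m, ((gapD α (2 * m) k) ^ 2)⁻¹ := by
        apply Finset.sum_le_sum
        intro k hk
        rw [Finset.mem_Icc] at hk
        have hp := hgpos m k hk.1 hk.2
        have := gapD_upper α h1 (2 * m) k
        gcongr
      rw [Finset.sum_const, Nat.card_Icc, nsmul_eq_mul] at hs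
      simp only [Nat.add_sub_cancel] at hs
      calc (K ^ 2)⁻¹ = 1 / (m : ℝ) * (m * (K ^ 2)⁻¹) := by field_simp
        _ ≤ _ := by gcongr
    exact lt_of_lt_of_le (by positivity) this
  refine ⟨(gapLim α 1) ^ 2 * I, by positivity, ?_⟩
  have hDm : Filter.Tendsto (fun m : ℕ => gapD α (2 * m) m) Filter.atTop (nhds (gapLim α 1)) := by
    apply gapD_tendsto α 1 h1 (fun m => m)
    refine tendsto_const_nhds.congr' ?_
    filter_upwards [Filter.eventually_gt_atTop 0] with m hm
    have hm0 : (m : ℝ) ≠ 0 := by positivity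
    exact (div_self hm0).symm
  have hsmall : Filter.Tendsto (fun m : ℕ => (1 / (m : ℝ)) * (1 / 2)) Filter.atTop (nhds 0) := by
    simpa only [zero_mul] using (tendsto_one_div_atTop_nhds_zero_nat (𝕜 := ℝ)).mul_const (1 / 2 : ℝ)
  have htot := ((hDm.pow 2).mul havg).sub hsmall
  rw [sub_zero] at htot
  refine htot.congr' ?_
  filter_upwards [Filter.eventually_gt_atTop 0] with m hm
  have hm0 : (0 : ℝ) < m := by exact_mod_cast hm
  have hp := hgpos m m hm le_rfl
  unfold Sq
  have e : ∀ k : ℕ, (1 - lamT α (2 * m) k) ^ (-((2 : ℕ) : ℤ)) =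
      (gapD α (2 * m) m) ^ 2 * ((gapD α (2 * m) k) ^ 2)⁻¹ := by
    intro k
    rw [one_sub_lamT α m k hp, zpow_neg, zpow_natCast, div_pow, inv_div, div_eq_mul_inv]
  simp only [e]
  rw [← Finset.mul_sum, sum_symm (fun k => ((gapD α (2 * m) k) ^ 2)⁻¹) m hm
    (fun k hk => by simp only [gapD_symm α (2 * m) k (by omega) hk])]
  push_cast
  field_simp
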